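/- For every integer k ≥ 1: if k ≡ 1 or 2 (mod 4) then N_F(2k + 1, 2k) = 2, and if k ≡ 1, 5 or 9 (mod 12) then N_F(2k + 2, 2k) = 3. -/

import Mathlib

/-- `N_F(n, 2k)`: the minimum `j` with `n - 2k < j ≤ n` such that `C(k + j - 1, j)` is odd.
Here the second argument is `k` (so `NF n k` is the paper's `N_F(n, 2k)`). -/
noncomputable def NF (n k : ℕ) : ℕ :=
  sInf {j : ℕ | n - 2 * k < j ∧ j ≤ n ∧ Odd (Nat.choose (k + j - 1) j)}

/-!
For `n = 2k + r` the least admissible index is `j = r + 1`, and `N_F` attains it exactly when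
`C(k + r, r + 1)` is odd. For `r = 1, 2` Lucas' theorem at the prime `2` reads this parity off the
last two binary digits of `k + r`.
-/

theorem odd_choose_iff_odd_choose_mod_and_div (n k : ℕ) :
    Odd (n.choose k) ↔ Odd ((n % 2).choose (k % 2)) ∧ Odd ((n / 2).choose (k / 2)) := by
  have lucas : n.choose k ≡ (n % 2).choose (k % 2) * (n / 2).choose (k / 2) [MOD 2] :=
    Choose.choose_modEq_choose_mod_mul_choose_div_nat
  rw [← Nat.odd_mul, Nat.odd_iff, Nat.odd_iff, lucas]

theorem odd_choose_two_iff (n : ℕ) : Odd (n.choose 2) ↔ n % 4 = 2 ∨ n % 4 = 3 := by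
  have digits : Odd (n.choose 2) ↔ Odd (n / 2) := by
    simpa using odd_choose_iff_odd_choose_mod_and_div n 2
  rw [digits, Nat.odd_iff]
  omega

theorem odd_choose_three_iff (n : ℕ) : Odd (n.choose 3) ↔ n % 4 = 3 := by
  have digits : Odd (n.choose 3) ↔ Odd (n % 2) ∧ Odd (n / 2) := by
    simpa using odd_choose_iff_odd_choose_mod_and_div n 3
  rw [digits, Nat.odd_iff, Nat.odd_iff]
  omega

theorem NF_two_mul_add_eq_succ_iff {k : ℕ} (hk : 1 ≤ k) (r : ℕ) :
    NF (2 * k + r) k = r + 1 ↔ Odd ((k + r).choose (r + 1)) := by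
  constructor
  · intro hNF
    have attained := Nat.sInf_mem (Nat.nonempty_of_sInf_eq_succ hNF)
    rw [← NF, hNF] at attained
    exact attained.2.2
  · intro hodd
    refine IsLeast.csInf_eq ⟨⟨by omega, by omega, hodd⟩, fun j hj => ?_⟩
    have lower_bound : 2 * k + r - 2 * k < j := hj.1
    omega

theorem NF_near_top_general (k : ℕ) (hk : 1 ≤ k) :
    (NF (2 * k + 1) k = 2 ↔ k % 4 = 1 ∨ k % 4 = 2) ∧
    (NF (2 * k + 2) k = 3 ↔ k % 4 = 1) := by
  constructor
  · rw [NF_two_mul_add_eq_succ_iff hk 1, odd_choose_two_iff]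
    omega
  · rw [NF_two_mul_add_eq_succ_iff hk 2, odd_choose_three_iff]
    omega

/-- For `k ≥ 1`: if `k ≡ 1, 2 (mod 4)` then `N_F(2k + 1, 2k) = 2`, and if
`k ≡ 1, 5, 9 (mod 12)` then `N_F(2k + 2, 2k) = 3`. -/
theorem NF_near_top (k : ℕ) (hk : 1 ≤ k) :
    ((k % 4 = 1 ∨ k % 4 = 2) → NF (2 * k + 1) k = 2) ∧
    ((k % 12 = 1 ∨ k % 12 = 5 ∨ k % 12 = 9) → NF (2 * k + 2) k = 3) := by
  obtain ⟨eq_two_iff, eq_three_iff⟩ := NF_near_top_general k hk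
  exact ⟨eq_two_iff.mpr, fun hmod => eq_three_iff.mpr (by omega)⟩
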